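/- Let α ≥ 1 and let ρ : (1,∞) → ℝ be a function such that for every s > 1, ρ(s) is the unique element of [0,1] satisfying 2·s^{(3α+1)/2}·ρ(s)⁴ + s^α·ρ(s)³ − 4·(s^{(3α+1)/2} + s^{(α+1)/2})·ρ(s)² − (2 + s + 2·s^α)·ρ(s) + 2·(s^{(3α+1)/2} + s^{(α+1)/2}) = 0. Define R(s) = log₂( (1 + s + s^α + 2·ρ(s)·s^{(α+1)/2}) / (1 + (1−ρ(s)²)·s^α) ). Then R(s)/log₂(s) tends to (1 + α)/4 as s → ∞. -/

import Mathlib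

open Real Filter

/-!
Write `S`, `I` for the two gains `s`, `s ^ α`, and `θ = 1 - r²`. A root `r` of the quartic satisfies
`2 I √(S I) θ² + 4 √(S I) θ = 2 √(S I) + (2 + S + I) r + I r θ`.
Since `S ≤ I`, the right-hand side is `O(I)`, so `√(S I) θ²` is bounded. Then `θ → 0` and `r → 1`,
and the right-hand side exceeds `4 √(S I) θ` by at least a multiple of `I`, so `√(S I) θ²` is also
bounded away from `0`. Hence `θ ≍ (S I)^(-1/4)`, the argument of the logarithm in the rate is
`≍ I / (θ I) ≍ (S I)^(1/4)`, and `(s · s ^ α)^(1/4) = s ^ ((1 + α) / 4)`.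
-/

open scoped Asymptotics

section LogAsymptotics

lemma log_sub_log_le_log_of_abs_le_mul {x y C : ℝ} (hx : x ≠ 0) (hC : 0 < C)
    (h : |x| ≤ C * |y|) : log x - log y ≤ log C := by
  have hy : |y| ≠ 0 := fun hy ↦ hx (by simpa [hy] using h)
  have hlog := log_le_log (abs_pos.2 hx) h
  rw [log_mul hC.ne' hy, log_abs, log_abs] at hlog
  linarith

lemma isBigO_log_sub_log_of_isTheta {ι : Type*} {l : Filter ι} {f g : ι → ℝ} (h : f =Θ[l] g) :
    (fun x ↦ log (f x) - log (g x)) =O[l] fun _ ↦ (1 : ℝ) := by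
  obtain ⟨C, hC, hfg⟩ := h.1.exists_pos
  obtain ⟨D, hD, hgf⟩ := h.2.exists_pos
  refine .of_bound (|log C| + |log D|) ?_
  filter_upwards [hfg.bound, hgf.bound, h.eq_zero_iff] with x hfx hgx hzero
  by_cases hg : g x = 0
  · simp only [hzero.2 hg, hg, sub_self, norm_zero]
    positivity
  have hf : f x ≠ 0 := mt hzero.1 hg
  have hupp := log_sub_log_le_log_of_abs_le_mul hf hC hfx
  have hlow := log_sub_log_le_log_of_abs_le_mul hg hD hgx
  rw [norm_one, mul_one, norm_eq_abs, abs_le]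
  constructor <;>
    linarith [le_abs_self (log C), le_abs_self (log D), abs_nonneg (log C), abs_nonneg (log D)]

lemma tendsto_log_div_log_of_isTheta_rpow {f : ℝ → ℝ} {c : ℝ} (h : f =Θ[atTop] fun s ↦ s ^ c) :
    Tendsto (fun s ↦ log (f s) / log s) atTop (nhds c) := by
  have hdiff : (fun s ↦ log (f s) - log (s ^ c)) =o[atTop] log :=
    (isBigO_log_sub_log_of_isTheta h).trans_isLittleO isLittleO_const_log_atTop
  have hlim := hdiff.tendsto_div_nhds_zero.add_const c
  rw [zero_add] at hlim
  refine hlim.congr' ?_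
  filter_upwards [eventually_gt_atTop 1] with s hs
  have hlog : log s ≠ 0 := (log_pos hs).ne'
  rw [log_rpow (by linarith)]
  field_simp
  ring

end LogAsymptotics

/-- The quartic whose root in `[0, 1]` is the correlation coefficient of Kramer's scheme, for a
direct link of gain `S` (the SNR) and a cross link of gain `I` (the INR). -/
noncomputable def kramerQuartic (S I r : ℝ) : ℝ :=
  2 * (I * √(S * I)) * r ^ 4 + I * r ^ 3 - 4 * (I * √(S * I) + √(S * I)) * r ^ 2 -
    (2 + S + 2 * I) * r + 2 * (I * √(S * I) + √(S * I))

/-- The ratio whose base-2 logarithm is the symmetric rate of Kramer's scheme, as a function of the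
gains `S` (SNR), `I` (INR) and of the correlation coefficient `r`. -/
noncomputable def kramerRatio (S I r : ℝ) : ℝ :=
  (1 + S + I + 2 * r * √(S * I)) / (1 + (1 - r ^ 2) * I)

lemma sqrt_mul_le_right {S I : ℝ} (hI : 0 ≤ I) (hSI : S ≤ I) : √(S * I) ≤ I :=
  Real.sqrt_le_iff.2 ⟨hI, by nlinarith⟩

section Root

variable {S I r : ℝ}

lemma kramerQuartic_eq_zero_iff :
    kramerQuartic S I r = 0 ↔
      2 * (I * √(S * I)) * (1 - r ^ 2) ^ 2 + 4 * √(S * I) * (1 - r ^ 2) =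
        2 * √(S * I) + (2 + S + I) * r + I * r * (1 - r ^ 2) := by
  rw [← sub_eq_zero (b := 2 * √(S * I) + _ + _), kramerQuartic]
  ring_nf

lemma sqrt_mul_mul_sq_le_four (hI : 1 ≤ I) (hSI : S ≤ I) (hr : r ∈ Set.Icc 0 1)
    (hroot : kramerQuartic S I r = 0) : √(S * I) * (1 - r ^ 2) ^ 2 ≤ 4 := by
  obtain ⟨hr0, hr1⟩ := hr
  have hB : √(S * I) ≤ I := sqrt_mul_le_right (by linarith) hSI
  have hθ : 0 ≤ 1 - r ^ 2 := by nlinarith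
  have hr_term : (2 + S + I) * r ≤ 4 * I := by nlinarith
  have hrθ_term : I * r * (1 - r ^ 2) ≤ I := by
    have : r * (1 - r ^ 2) ≤ 1 := by nlinarith
    nlinarith
  have hθ_term : 0 ≤ 4 * √(S * I) * (1 - r ^ 2) := by positivity
  have hscaled : I * (√(S * I) * (1 - r ^ 2) ^ 2) ≤ I * 4 := by
    linarith [kramerQuartic_eq_zero_iff.1 hroot]
  exact le_of_mul_le_mul_left hscaled (by linarith)

lemma one_sub_sq_le_quarter (hS : 0 ≤ S) (hSI : S ≤ I) (hB : 64 ≤ √(S * I))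
    (hr : r ∈ Set.Icc 0 1) (hroot : kramerQuartic S I r = 0) : 1 - r ^ 2 ≤ 1 / 4 := by
  have hI : 1 ≤ I := by linarith [sqrt_mul_le_right (hS.trans hSI) hSI]
  nlinarith [sqrt_mul_mul_sq_le_four hI hSI hr hroot]

lemma quarter_le_sqrt_mul_mul_sq (hS : 0 ≤ S) (hSI : S ≤ I) (hB : 64 ≤ √(S * I))
    (hr : r ∈ Set.Icc 0 1) (hroot : kramerQuartic S I r = 0) :
    1 / 4 ≤ √(S * I) * (1 - r ^ 2) ^ 2 := by
  have hBI : √(S * I) ≤ I := sqrt_mul_le_right (hS.trans hSI) hSI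
  have hθ : 1 - r ^ 2 ≤ 1 / 4 := one_sub_sq_le_quarter hS hSI hB hr hroot
  obtain ⟨hr0, hr1⟩ := hr
  have hθ0 : 0 ≤ 1 - r ^ 2 := by nlinarith
  have hr_half : 1 / 2 ≤ r := by nlinarith
  have hr_term : I * (1 / 2) ≤ (2 + S + I) * r := by nlinarith
  have hrθ_term : 0 ≤ I * r * (1 - r ^ 2) := by
    have : 0 ≤ I := hS.trans hSI
    positivity
  have hθ_term : 4 * √(S * I) * (1 - r ^ 2) ≤ √(S * I) := by nlinarith
  have hscaled : I * (1 / 4) ≤ I * (√(S * I) * (1 - r ^ 2) ^ 2) := by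
    linarith [kramerQuartic_eq_zero_iff.1 hroot]
  exact le_of_mul_le_mul_left hscaled (by linarith)

lemma sqrt_sqrt_mul_mul_mem_Icc (hS : 0 ≤ S) (hSI : S ≤ I) (hB : 64 ≤ √(S * I))
    (hr : r ∈ Set.Icc 0 1) (hroot : kramerQuartic S I r = 0) :
    √√(S * I) * (1 - r ^ 2) ∈ Set.Icc (1 / 2) 2 := by
  have hI : 1 ≤ I := by linarith [sqrt_mul_le_right (hS.trans hSI) hSI]
  have hθ : 0 ≤ 1 - r ^ 2 := by nlinarith [hr.1, hr.2]
  have hsq : (√√(S * I) * (1 - r ^ 2)) ^ 2 = √(S * I) * (1 - r ^ 2) ^ 2 := by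
    rw [mul_pow, sq_sqrt (sqrt_nonneg _)]
  constructor
  · refine (sq_le_sq₀ (by positivity) (by positivity)).1 ?_
    linarith [quarter_le_sqrt_mul_mul_sq hS hSI hB hr hroot]
  · refine (sq_le_sq₀ (by positivity) (by positivity)).1 ?_
    linarith [sqrt_mul_mul_sq_le_four hI hSI hr hroot]

lemma kramerRatio_mem_Icc (hS : 0 ≤ S) (hSI : S ≤ I) (hB : 64 ≤ √(S * I))
    (hr : r ∈ Set.Icc 0 1) (hroot : kramerQuartic S I r = 0) :
    kramerRatio S I r ∈ Set.Icc (√√(S * I) / 3) (8 * √√(S * I)) := by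
  obtain ⟨hlow, hupp⟩ := sqrt_sqrt_mul_mul_mem_Icc hS hSI hB hr hroot
  obtain ⟨hr0, hr1⟩ := hr
  have hI : 0 ≤ I := hS.trans hSI
  have hBI : √(S * I) ≤ I := sqrt_mul_le_right hI hSI
  have hw : 8 ≤ √√(S * I) := le_sqrt_of_sq_le (by linarith)
  have hwB : √√(S * I) ≤ √(S * I) := by nlinarith [sq_sqrt (sqrt_nonneg (S * I))]
  have hθ : 0 ≤ 1 - r ^ 2 := by nlinarith
  have hden : 0 < 1 + (1 - r ^ 2) * I := by positivity
  have hrB : 0 ≤ r * √(S * I) := by positivity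
  have hrB_le : r * √(S * I) ≤ √(S * I) := mul_le_of_le_one_left (sqrt_nonneg _) hr1
  have hlowI := mul_le_mul_of_nonneg_right hlow hI
  have huppI := mul_le_mul_of_nonneg_right hupp hI
  constructor
  · rw [kramerRatio, le_div_iff₀ hden]
    linarith
  · rw [kramerRatio, div_le_iff₀ hden]
    linarith

end Root

lemma sqrt_mul_rpow_self {s : ℝ} (hs : 0 < s) (α : ℝ) : √(s * s ^ α) = s ^ ((α + 1) / 2) := by
  rw [mul_comm, ← rpow_add_one hs.ne', sqrt_eq_rpow, ← rpow_mul hs.le]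
  ring_nf

lemma mul_sqrt_mul_rpow_self {s : ℝ} (hs : 0 < s) (α : ℝ) :
    s ^ α * √(s * s ^ α) = s ^ ((3 * α + 1) / 2) := by
  rw [sqrt_mul_rpow_self hs, ← rpow_add hs]
  ring_nf

lemma sqrt_sqrt_mul_rpow_self {s : ℝ} (hs : 0 < s) (α : ℝ) :
    √√(s * s ^ α) = s ^ ((1 + α) / 4) := by
  rw [sqrt_mul_rpow_self hs, sqrt_eq_rpow, ← rpow_mul hs.le]
  ring_nf

lemma isTheta_kramerRatio_rpow {α : ℝ} (hα : 1 ≤ α) {ρ : ℝ → ℝ}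
    (hρ : ∀ᶠ s in atTop, ρ s ∈ Set.Icc 0 1 ∧ kramerQuartic s (s ^ α) (ρ s) = 0) :
    (fun s ↦ kramerRatio s (s ^ α) (ρ s)) =Θ[atTop] fun s ↦ s ^ ((1 + α) / 4) := by
  have hbounds : ∀ᶠ s in atTop, 0 < s ^ ((1 + α) / 4) ∧ kramerRatio s (s ^ α) (ρ s) ∈
      Set.Icc (s ^ ((1 + α) / 4) / 3) (8 * s ^ ((1 + α) / 4)) := by
    filter_upwards [hρ, eventually_ge_atTop 64] with s ⟨hmem, hroot⟩ hs
    have hs0 : 0 < s := by linarith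
    have hle : s ≤ s ^ α := self_le_rpow_of_one_le (by linarith) hα
    have hB : 64 ≤ √(s * s ^ α) := le_sqrt_of_sq_le (by nlinarith)
    rw [← sqrt_sqrt_mul_rpow_self hs0]
    exact ⟨by positivity, kramerRatio_mem_Icc hs0.le hle hB hmem hroot⟩
  refine ⟨.of_bound 8 ?_, .of_bound 3 ?_⟩ <;>
    filter_upwards [hbounds] with s ⟨hpos, hlow, hupp⟩ <;>
    rw [norm_of_nonneg hpos.le, norm_of_nonneg (by linarith)] <;>
    linarith

/-- Generalized degrees-of-freedom of Kramer's feedback scheme for `α ≥ 1`. -/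
theorem kramer_gdof_high (α : ℝ) (hα : 1 ≤ α) (ρ : ℝ → ℝ)
    (hρ : ∀ s : ℝ, 1 < s →
      ρ s ∈ Set.Icc (0 : ℝ) 1 ∧
      (2 * s ^ ((3 * α + 1) / 2) * ρ s ^ 4 + s ^ α * ρ s ^ 3 -
          4 * (s ^ ((3 * α + 1) / 2) + s ^ ((α + 1) / 2)) * ρ s ^ 2 -
          (2 + s + 2 * s ^ α) * ρ s +
          2 * (s ^ ((3 * α + 1) / 2) + s ^ ((α + 1) / 2)) = 0) ∧
      ∀ r ∈ Set.Icc (0 : ℝ) 1,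
        2 * s ^ ((3 * α + 1) / 2) * r ^ 4 + s ^ α * r ^ 3 -
            4 * (s ^ ((3 * α + 1) / 2) + s ^ ((α + 1) / 2)) * r ^ 2 -
            (2 + s + 2 * s ^ α) * r +
            2 * (s ^ ((3 * α + 1) / 2) + s ^ ((α + 1) / 2)) = 0 → r = ρ s) :
    Tendsto (fun s : ℝ =>
        Real.logb 2 ((1 + s + s ^ α + 2 * ρ s * s ^ ((α + 1) / 2)) /
            (1 + (1 - ρ s ^ 2) * s ^ α)) / Real.logb 2 s)
      atTop (nhds ((1 + α) / 4)) := by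
  have hroots : ∀ᶠ s in atTop, ρ s ∈ Set.Icc 0 1 ∧ kramerQuartic s (s ^ α) (ρ s) = 0 := by
    filter_upwards [eventually_gt_atTop 1] with s hs
    obtain ⟨hmem, hroot, -⟩ := hρ s hs
    rw [kramerQuartic, mul_sqrt_mul_rpow_self (by linarith), sqrt_mul_rpow_self (by linarith)]
    exact ⟨hmem, hroot⟩
  refine (tendsto_log_div_log_of_isTheta_rpow (isTheta_kramerRatio_rpow hα hroots)).congr' ?_
  filter_upwards [eventually_gt_atTop 0] with s hs
  rw [kramerRatio, sqrt_mul_rpow_self hs, logb, logb,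
    div_div_div_cancel_right₀ (log_pos one_lt_two).ne']
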